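/- Assume SSCP and let t_l < t_r in T. Assume moreover that for every x ∈ [t_l, t_r] the best-response sets φ^l_{t_l}(x) and φ^r_{t_r}(x) are nonempty and contain a greatest element and a least element. Then the set E(t_l,t_r) of Nash equilibria is nonempty and possesses a greatest element (x̄_l*, x̄_r*) and a least element (x̲_l*, x̲_r*) with respect to the coordinatewise order. -/

import Mathlib

/-!
The idea is Tarski's fixed point theorem applied to extremal best responses.

* `U` is symmetric in the two platforms (`U_comm`), so `brL` and `brR` coincide and every fact about
  the left candidate transfers to the right one. Every winning probability is positive (`P_pos`).
* A best response to a platform `x ≠ t` lies between the ideal policy `t` (included) and `x`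
  (excluded), and `t` is the only best response to itself (`brL_mem_of_gt`, `brL_mem_of_lt`,
  `brL_self`). Hence both platforms of every equilibrium lie in `[tl, tr]` (`mem_E_bounds`).
* On that interval SSCP says that best responses are increasing in the strong sense that *every*
  selection is monotone (`brL_mono`, `brR_mono`). In particular the greatest selections `gL`, `gR`
  are monotone self-maps of `[tl, tr]`, and so are the least ones.
* The greatest fixed point `x` of `gL ∘ gR` gives the equilibrium `(x, gR x)`. It dominates every
  equilibrium `(p, q)`, because `p ≤ gL q` and `q ≤ gR p` imply `p ≤ gL (gR p)`
  (`exists_greatest_of_selection`). The least equilibrium is obtained from the order dual.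
-/

open Set

/-- The policy space `T = [0,1] ⊆ ℝ`. -/
def T : Set ℝ := Set.Icc 0 1

/-- Hypotheses on the beliefs `F` about the median voter's ideal policy:
continuous, strictly increasing on `T`, with values in `[0,1]` (full support). -/
def Fhyp (F : ℝ → ℝ) : Prop :=
  ContinuousOn F T ∧ StrictMonoOn F T ∧ ∀ x ∈ T, 0 ≤ F x ∧ F x ≤ 1

/-- The probability that candidate `l` wins given platforms `xl, xr`. -/
noncomputable def P (F : ℝ → ℝ) (xl xr : ℝ) : ℝ :=
  if xl < xr then F ((xl + xr) / 2)
  else if xl = xr then 1 / 2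
  else 1 - F ((xl + xr) / 2)

/-- Hypotheses on the payoff `u x t`: jointly continuous on `T × T`, strictly
concave in the platform, and uniquely maximized at the ideal policy. -/
def uhyp (u : ℝ → ℝ → ℝ) : Prop :=
  ContinuousOn (fun p : ℝ × ℝ => u p.1 p.2) (T ×ˢ T) ∧
  (∀ t ∈ T, StrictConcaveOn ℝ T (fun x => u x t)) ∧
  (∀ t ∈ T, ∀ x ∈ T, x ≠ t → u x t < u t t)

/-- Expected payoff of a candidate with ideal policy `t` given platforms `xl, xr`. -/
noncomputable def U (F : ℝ → ℝ) (u : ℝ → ℝ → ℝ) (t xl xr : ℝ) : ℝ :=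
  P F xl xr * u xl t + (1 - P F xl xr) * u xr t

/-- Best-response set of candidate `l` with ideal policy `t` to opponent platform `x`. -/
def brL (F : ℝ → ℝ) (u : ℝ → ℝ → ℝ) (t x : ℝ) : Set ℝ :=
  {y ∈ T | ∀ z ∈ T, U F u t z x ≤ U F u t y x}

/-- Best-response set of candidate `r` with ideal policy `t` to opponent platform `x`. -/
def brR (F : ℝ → ℝ) (u : ℝ → ℝ → ℝ) (t x : ℝ) : Set ℝ :=
  {y ∈ T | ∀ z ∈ T, U F u t x z ≤ U F u t x y}

/-- The set of Nash equilibria given ideal policies `tl, tr`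
(ordered coordinatewise via the product order on `ℝ × ℝ`). -/
def E (F : ℝ → ℝ) (u : ℝ → ℝ → ℝ) (tl tr : ℝ) : Set (ℝ × ℝ) :=
  {p | p.1 ∈ brL F u tl p.2 ∧ p.2 ∈ brR F u tr p.1}

/-- Strict single crossing property (SSCP). -/
def SSCP (F : ℝ → ℝ) (u : ℝ → ℝ → ℝ) : Prop :=
  ∀ t x x' y y' t' : ℝ, t ∈ T → x ∈ T → x' ∈ T → y ∈ T → y' ∈ T → t' ∈ T →
    t ≤ x → x < x' → x' < y → y < y' → y' ≤ t' →
    (U F u t x' y ≥ U F u t x y → U F u t x' y' > U F u t x y') ∧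
    (U F u t' x' y ≥ U F u t' x' y' → U F u t' x y > U F u t' x y')

/-- Strict log supermodularity (SLS). -/
def SLS (u : ℝ → ℝ → ℝ) : Prop :=
  ∀ t t' x x' y : ℝ, t ∈ T → t' ∈ T → x ∈ T → x' ∈ T → y ∈ T →
    ((t < t' ∧ t' ≤ x ∧ x < x' ∧ x' < y) ∨ (y < x ∧ x < x' ∧ x' ≤ t ∧ t < t')) →
    (u x' t' - u y t') / (u x t' - u y t') > (u x' t - u y t) / (u x t - u y t)

/-- The expected policy function. -/
noncomputable def pol (F : ℝ → ℝ) (xl xr : ℝ) : ℝ :=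
  P F xl xr * xl + (1 - P F xl xr) * xr

/-! ### Extremal mutual best responses of monotone correspondences -/

/-- Tarski's argument for two correspondences `L`, `R` with monotone greatest selections on
`Icc a b`: the mutual best responses in the square have a greatest element. Stated over a general
order so that it also applies to the dual order, with least selections. -/
lemma exists_greatest_of_selection {α : Type*} [ConditionallyCompleteLattice α] {a b : α}
    (hab : a ≤ b) (L R : α → Set α) (gL gR : α → α)
    (hL : ∀ x ∈ Icc a b, IsGreatest (L x) (gL x)) (hR : ∀ x ∈ Icc a b, IsGreatest (R x) (gR x))
    (mL : ∀ x ∈ Icc a b, gL x ∈ Icc a b) (mR : ∀ x ∈ Icc a b, gR x ∈ Icc a b)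
    (monoL : MonotoneOn gL (Icc a b)) (monoR : MonotoneOn gR (Icc a b)) :
    ∃ x y, x ∈ L y ∧ y ∈ R x ∧
      ∀ p ∈ Icc a b, ∀ q ∈ Icc a b, p ∈ L q → q ∈ R p → p ≤ x ∧ q ≤ y := by
  set A : Set α := {x | x ∈ Icc a b ∧ x ≤ gL (gR x)} with hA
  have haI : a ∈ Icc a b := ⟨le_rfl, hab⟩
  have haA : a ∈ A := ⟨haI, (mL _ (mR _ haI)).1⟩
  have hbdd : BddAbove A := ⟨b, fun x hx => hx.1.2⟩
  have hsI : sSup A ∈ Icc a b := ⟨le_csSup hbdd haA, csSup_le ⟨a, haA⟩ fun x hx => hx.1.2⟩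
  have hmono : ∀ x ∈ Icc a b, ∀ y ∈ Icc a b, x ≤ y → gL (gR x) ≤ gL (gR y) :=
    fun x hx y hy h => monoL (mR x hx) (mR y hy) (monoR hx hy h)
  have h1 : sSup A ≤ gL (gR (sSup A)) :=
    csSup_le ⟨a, haA⟩ fun x hx => hx.2.trans (hmono x hx.1 _ hsI (le_csSup hbdd hx))
  have hgI := mL _ (mR _ hsI)
  have h2 : gL (gR (sSup A)) = sSup A :=
    le_antisymm (le_csSup hbdd ⟨hgI, hmono _ hsI _ hgI h1⟩) h1
  refine ⟨sSup A, gR (sSup A), ?_, (hR _ hsI).1, fun p hp q hq hpq hqp => ?_⟩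
  · have := (hL _ (mR _ hsI)).1
    rwa [h2] at this
  · have hq' : q ≤ gR p := (hR p hp).2 hqp
    have hpA : p ∈ A := ⟨hp, ((hL q hq).2 hpq).trans (monoL hq (mR p hp) hq')⟩
    have hps := le_csSup hbdd hpA
    exact ⟨hps, hq'.trans (monoR hp hsI hps)⟩

/-! ### Symmetry of the payoff and positivity of the winning probability -/

lemma P_swap (F : ℝ → ℝ) (x y : ℝ) : P F x y = 1 - P F y x := by
  unfold P
  rcases lt_trichotomy x y with h | h | h
  · simp [h, h.not_gt, h.ne', add_comm]
  · subst h; norm_num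
  · simp [h, h.not_gt, h.ne', add_comm]

lemma U_comm (F : ℝ → ℝ) (u : ℝ → ℝ → ℝ) (t x y : ℝ) : U F u t x y = U F u t y x := by
  unfold U
  rw [P_swap F x y]
  ring

lemma brR_eq_brL (F : ℝ → ℝ) (u : ℝ → ℝ → ℝ) (t x : ℝ) : brR F u t x = brL F u t x := by
  unfold brR brL
  simp only [U_comm F u t x]

lemma mid_mem {x y : ℝ} (hx : x ∈ T) (hy : y ∈ T) : (x + y) / 2 ∈ T := by
  simp only [T, mem_Icc] at *
  constructor <;> linarith [hx.1, hx.2, hy.1, hy.2]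

/-- Distinct platforms have their midpoint in the open interval `(0, 1)`, where a strictly
increasing `F` with values in `[0, 1]` takes values in `(0, 1)`; equal platforms win with
probability `1 / 2`. -/
lemma P_pos {F : ℝ → ℝ} (hF : Fhyp F) {x y : ℝ} (hx : x ∈ T) (hy : y ∈ T) : 0 < P F x y := by
  have hm := mid_mem hx hy
  obtain ⟨-, hmono, hr⟩ := hF
  have h0 : (0 : ℝ) ∈ T := by simp [T]
  have h1 : (1 : ℝ) ∈ T := by simp [T]
  have hx' : 0 ≤ x ∧ x ≤ 1 := hx
  have hy' : 0 ≤ y ∧ y ≤ 1 := hy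
  unfold P
  split_ifs with h h'
  · have := hmono h0 hm (by linarith)
    linarith [(hr 0 h0).1]
  · norm_num
  · have hlt : y < x := lt_of_le_of_ne (not_lt.1 h) (Ne.symm h')
    have := hmono hm h1 (by linarith)
    linarith [(hr 1 h1).2]

lemma U_eq (F : ℝ → ℝ) (u : ℝ → ℝ → ℝ) (t x y : ℝ) :
    U F u t x y = u y t + P F x y * (u x t - u y t) := by
  unfold U; ring

/-! ### Location of best responses and equilibria -/

/-- A best response is strictly better than the opponent's platform, since the ideal policy is. -/
lemma lt_of_mem_brL {F : ℝ → ℝ} {u : ℝ → ℝ → ℝ} (hF : Fhyp F) (hu : uhyp u) {t x y : ℝ}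
    (ht : t ∈ T) (hx : x ∈ T) (hne : x ≠ t) (hy : y ∈ brL F u t x) : u x t < u y t := by
  have h := hy.2 t ht
  rw [U_eq, U_eq] at h
  have h1 := mul_pos (P_pos hF ht hx) (sub_pos.2 (hu.2.2 t ht x hx hne))
  have h2 : 0 < P F y x * (u y t - u x t) := by linarith
  exact sub_pos.1 (pos_of_mul_pos_right h2 (P_pos hF hy.1 hx).le)

lemma brL_self {F : ℝ → ℝ} {u : ℝ → ℝ → ℝ} (hF : Fhyp F) (hu : uhyp u) {t y : ℝ}
    (ht : t ∈ T) (hy : y ∈ brL F u t t) : y = t := by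
  by_contra hne
  have h := hy.2 t ht
  rw [U_eq, U_eq] at h
  have h1 := mul_pos (P_pos hF hy.1 ht) (sub_pos.2 (hu.2.2 t ht y hy.1 hne))
  linarith

/-- No best response wins with lower probability than the ideal policy would, unless it is the
ideal policy itself. -/
lemma le_P_of_mem_brL {F : ℝ → ℝ} {u : ℝ → ℝ → ℝ} (hF : Fhyp F) (hu : uhyp u) {t x y : ℝ}
    (ht : t ∈ T) (hx : x ∈ T) (hne : x ≠ t) (hyt : y ≠ t) (hy : y ∈ brL F u t x) :
    P F t x ≤ P F y x := by
  by_contra! hlt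
  have h := hy.2 t ht
  rw [U_eq, U_eq] at h
  have h1 := lt_of_mem_brL hF hu ht hx hne hy
  have h2 := hu.2.2 t ht y hy.1 hyt
  have h3 := P_pos hF ht hx
  nlinarith [mul_pos (sub_pos.2 hlt) (sub_pos.2 h1), mul_pos h3 (sub_pos.2 h2)]

lemma brL_mem_of_gt {F : ℝ → ℝ} {u : ℝ → ℝ → ℝ} (hF : Fhyp F) (hu : uhyp u) {t x y : ℝ}
    (ht : t ∈ T) (hx : x ∈ T) (h : t < x) (hy : y ∈ brL F u t x) : t ≤ y ∧ y < x := by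
  have hlt := lt_of_mem_brL hF hu ht hx h.ne' hy
  have hyx : y < x := by
    by_contra! hxy
    have := (hu.2.1 t ht).concaveOn.min_le_of_mem_Icc ht hy.1 ⟨h.le, hxy⟩
    rcases min_le_iff.1 this with h' | h'
    · exact absurd h' (not_le.2 (hu.2.2 t ht x hx h.ne'))
    · exact absurd h' (not_le.2 hlt)
  refine ⟨?_, hyx⟩
  by_contra! hyt
  have hP := le_P_of_mem_brL hF hu ht hx h.ne' hyt.ne hy
  have := hF.2.1 (mid_mem hy.1 hx) (mid_mem ht hx) (by linarith : (y + x) / 2 < (t + x) / 2)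
  simp only [P, if_pos h, if_pos hyx] at hP
  linarith

lemma brL_mem_of_lt {F : ℝ → ℝ} {u : ℝ → ℝ → ℝ} (hF : Fhyp F) (hu : uhyp u) {t x y : ℝ}
    (ht : t ∈ T) (hx : x ∈ T) (h : x < t) (hy : y ∈ brL F u t x) : x < y ∧ y ≤ t := by
  have hlt := lt_of_mem_brL hF hu ht hx h.ne hy
  have hxy : x < y := by
    by_contra! hyx
    have := (hu.2.1 t ht).concaveOn.min_le_of_mem_Icc hy.1 ht ⟨hyx, h.le⟩
    rcases min_le_iff.1 this with h' | h'
    · exact absurd h' (not_le.2 hlt)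
    · exact absurd h' (not_le.2 (hu.2.2 t ht x hx h.ne))
  refine ⟨hxy, ?_⟩
  by_contra! hyt
  have hP := le_P_of_mem_brL hF hu ht hx h.ne hyt.ne' hy
  have := hF.2.1 (mid_mem ht hx) (mid_mem hy.1 hx) (by linarith : (t + x) / 2 < (y + x) / 2)
  simp only [P, if_neg h.not_gt, if_neg h.ne', if_neg hxy.not_gt, if_neg hxy.ne'] at hP
  linarith

lemma brL_mem_of_ge {F : ℝ → ℝ} {u : ℝ → ℝ → ℝ} (hF : Fhyp F) (hu : uhyp u) {t x y : ℝ}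
    (ht : t ∈ T) (hx : x ∈ T) (h : t ≤ x) (hy : y ∈ brL F u t x) : y ∈ Icc t x := by
  rcases h.eq_or_lt with rfl | h
  · simp [brL_self hF hu ht hy]
  · have := brL_mem_of_gt hF hu ht hx h hy
    exact ⟨this.1, this.2.le⟩

lemma brL_mem_of_le {F : ℝ → ℝ} {u : ℝ → ℝ → ℝ} (hF : Fhyp F) (hu : uhyp u) {t x y : ℝ}
    (ht : t ∈ T) (hx : x ∈ T) (h : x ≤ t) (hy : y ∈ brL F u t x) : y ∈ Icc x t := by
  rcases h.eq_or_lt with rfl | h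
  · simp [brL_self hF hu ht hy]
  · have := brL_mem_of_lt hF hu ht hx h hy
    exact ⟨this.1.le, this.2⟩

/-- Against a platform outside `[tl, tr]` a candidate moves back towards its own ideal policy, so the
two candidates would disagree on the order of the platforms. -/
lemma mem_E_bounds {F : ℝ → ℝ} {u : ℝ → ℝ → ℝ} (hF : Fhyp F) (hu : uhyp u) {tl tr : ℝ}
    (htl : tl ∈ T) (htr : tr ∈ T) (hlt : tl < tr) {p : ℝ × ℝ} (hp : p ∈ E F u tl tr) :
    p.1 ∈ Icc tl tr ∧ p.2 ∈ Icc tl tr := by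
  obtain ⟨h1, h2⟩ := hp
  rw [brR_eq_brL] at h2
  rcases le_or_gt p.2 tl with h | h
  · -- The left platform is then below `tr`, so the right one exceeds it, contradicting `p.2 ≤ p.1`.
    have a := brL_mem_of_le hF hu htl h2.1 h h1
    have b := brL_mem_of_lt hF hu htr h1.1 (a.2.trans_lt hlt) h2
    exact absurd a.1 (not_le.2 b.1)
  · have a := brL_mem_of_gt hF hu htl h2.1 h h1
    rcases le_or_gt p.1 tr with h' | h'
    · have b := brL_mem_of_le hF hu htr h1.1 h' h2
      exact ⟨⟨a.1, h'⟩, ⟨h.le, b.2⟩⟩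
    · have b := brL_mem_of_gt hF hu htr h1.1 h' h2
      exact ⟨⟨a.1, a.2.le.trans (by linarith [b.2, a.2])⟩, ⟨h.le, by linarith [b.2, a.2]⟩⟩

/-! ### Monotonicity of best responses -/

/-- Best responses of the left candidate increase with the opponent's platform, whatever the
selection: if `x' < x`, SSCP would turn the optimality of `x` against `y` into a strict preference
for `x` over `x'` against `y'`. -/
lemma brL_mono {F : ℝ → ℝ} {u : ℝ → ℝ → ℝ} (hF : Fhyp F) (hu : uhyp u) (hS : SSCP F u)
    {tl tr y y' x x' : ℝ} (htl : tl ∈ T) (htr : tr ∈ T) (hy : tl ≤ y) (hyy : y < y')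
    (hy' : y' ≤ tr) (hx : x ∈ brL F u tl y) (hx' : x' ∈ brL F u tl y') : x ≤ x' := by
  have hyT : y ∈ T := ⟨htl.1.trans hy, (hyy.le.trans hy').trans htr.2⟩
  have hyT' : y' ∈ T := ⟨hyT.1.trans hyy.le, hy'.trans htr.2⟩
  have b' := brL_mem_of_gt hF hu htl hyT' (hy.trans_lt hyy) hx'
  rcases hy.eq_or_lt with rfl | hlt
  · exact (brL_self hF hu htl hx).trans_le b'.1
  · have b := brL_mem_of_gt hF hu htl hyT hlt hx
    by_contra! hc
    have := (hS tl x' x y y' tr htl hx'.1 hx.1 hyT hyT' htr b'.1 hc b.2 hyy hy').1 (hx.2 _ hx'.1)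
    exact absurd (hx'.2 x hx.1) (not_le.2 this)

lemma brR_mono {F : ℝ → ℝ} {u : ℝ → ℝ → ℝ} (hF : Fhyp F) (hu : uhyp u) (hS : SSCP F u)
    {tl tr x x' y y' : ℝ} (htl : tl ∈ T) (htr : tr ∈ T) (hx : tl ≤ x) (hxx : x < x')
    (hx' : x' ≤ tr) (hy : y ∈ brR F u tr x) (hy' : y' ∈ brR F u tr x') : y ≤ y' := by
  have hxT : x ∈ T := ⟨htl.1.trans hx, (hxx.le.trans hx').trans htr.2⟩
  have hxT' : x' ∈ T := ⟨hxT.1.trans hxx.le, hx'.trans htr.2⟩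
  have b := brL_mem_of_lt hF hu htr hxT (hxx.trans_le hx') (brR_eq_brL F u tr x ▸ hy)
  rcases hx'.eq_or_lt with rfl | hlt
  · exact b.2.trans_eq (brL_self hF hu htr (brR_eq_brL F u x' x' ▸ hy')).symm
  · have b' := brL_mem_of_lt hF hu htr hxT' hlt (brR_eq_brL F u tr x' ▸ hy')
    by_contra! hc
    have := (hS tl x x' y' y tr htl hxT hxT' hy'.1 hy.1 htr hx hxx b'.1 hc b.2).2 (hy'.2 _ hy.1)
    exact absurd (hy.2 y' hy'.1) (not_le.2 this)

/-! ### Existence of extremal equilibria -/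

/-- Under SSCP, if best responses have greatest and least elements over
`[t_l, t_r]`, the set of Nash equilibria is nonempty and possesses greatest and
least elements in the coordinatewise order. -/
theorem equilibria_nonempty_greatest_least (F : ℝ → ℝ) (u : ℝ → ℝ → ℝ)
    (hF : Fhyp F) (hu : uhyp u) (hSSCP : SSCP F u)
    (tl tr : ℝ) (htl : tl ∈ T) (htr : tr ∈ T) (hlt : tl < tr)
    (hbrL : ∀ x ∈ Set.Icc tl tr, (brL F u tl x).Nonempty ∧
      (∃ a, IsGreatest (brL F u tl x) a) ∧ (∃ a, IsLeast (brL F u tl x) a))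
    (hbrR : ∀ x ∈ Set.Icc tl tr, (brR F u tr x).Nonempty ∧
      (∃ a, IsGreatest (brR F u tr x) a) ∧ (∃ a, IsLeast (brR F u tr x) a)) :
    (E F u tl tr).Nonempty ∧
      (∃ p, IsGreatest (E F u tl tr) p) ∧ (∃ p, IsLeast (E F u tl tr) p) := by

  choose! gL hgL using fun x hx => (hbrL x hx).2.1
  choose! lL hlL using fun x hx => (hbrL x hx).2.2
  choose! gR hgR using fun x hx => (hbrR x hx).2.1
  choose! lR hlR using fun x hx => (hbrR x hx).2.2
  have hT : ∀ x ∈ Icc tl tr, x ∈ T := fun x hx => ⟨htl.1.trans hx.1, hx.2.trans htr.2⟩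
  have mL : ∀ x ∈ Icc tl tr, ∀ y ∈ brL F u tl x, y ∈ Icc tl tr := fun x hx y hy =>
    have h := brL_mem_of_ge hF hu htl (hT x hx) hx.1 hy
    ⟨h.1, h.2.trans hx.2⟩
  have mR : ∀ x ∈ Icc tl tr, ∀ y ∈ brR F u tr x, y ∈ Icc tl tr := fun x hx y hy =>
    have h := brL_mem_of_le hF hu htr (hT x hx) hx.2 (brR_eq_brL F u tr x ▸ hy)
    ⟨hx.1.trans h.1, h.2⟩
  have monoL : ∀ g : ℝ → ℝ, (∀ x ∈ Icc tl tr, g x ∈ brL F u tl x) → MonotoneOn g (Icc tl tr) := by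
    intro g hg x hx y hy hxy
    rcases hxy.eq_or_lt with rfl | h
    · exact le_rfl
    · exact brL_mono hF hu hSSCP htl htr hx.1 h hy.2 (hg x hx) (hg y hy)
  have monoR : ∀ g : ℝ → ℝ, (∀ x ∈ Icc tl tr, g x ∈ brR F u tr x) → MonotoneOn g (Icc tl tr) := by
    intro g hg x hx y hy hxy
    rcases hxy.eq_or_lt with rfl | h
    · exact le_rfl
    · exact brR_mono hF hu hSSCP htl htr hx.1 h hy.2 (hg x hx) (hg y hy)
  obtain ⟨x, y, hx, hy, hmax⟩ := exists_greatest_of_selection hlt.le (brL F u tl) (brR F u tr) gL gR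
    hgL hgR (fun x hx => mL x hx _ (hgL x hx).1) (fun x hx => mR x hx _ (hgR x hx).1)
    (monoL gL fun x hx => (hgL x hx).1) (monoR gR fun x hx => (hgR x hx).1)
  -- In `ℝᵒᵈ` the interval runs from `tr` to `tl`, and its membership conditions are swapped.
  obtain ⟨x', y', hx', hy', hmin⟩ := exists_greatest_of_selection (α := ℝᵒᵈ) (a := tr) (b := tl)
    hlt.le (brL F u tl) (brR F u tr) lL lR
    (fun x hx => hlL x hx.symm) (fun x hx => hlR x hx.symm)
    (fun x hx => (mL x hx.symm _ (hlL x hx.symm).1).symm)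
    (fun x hx => (mR x hx.symm _ (hlR x hx.symm).1).symm)
    (fun x hx y hy h => monoL lL (fun x hx => (hlL x hx).1) hy.symm hx.symm h)
    (fun x hx y hy h => monoR lR (fun x hx => (hlR x hx).1) hy.symm hx.symm h)
  refine ⟨⟨(x, y), hx, hy⟩, ⟨(x, y), ⟨hx, hy⟩, fun p hp => ?_⟩,
    ⟨(x', y'), ⟨hx', hy'⟩, fun p hp => ?_⟩⟩
  · have hb := mem_E_bounds hF hu htl htr hlt hp
    exact hmax _ hb.1 _ hb.2 hp.1 hp.2
  · have hb := mem_E_bounds hF hu htl htr hlt hp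
    exact hmin _ hb.1.symm _ hb.2.symm hp.1 hp.2
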